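/- Under the GAN setup, the supremum over all measurable functions D : Z → (0,1) of J(D) is at least −log 4, and this supremum equals −log 4 if and only if p_G = p_T μ-almost everywhere. Consequently, the minimax value of the GAN game, namely the infimum over probability densities p_G of the supremum over measurable D : Z → (0,1) of J(D), equals −log 4, attained exactly at p_G = p_T (μ-a.e.). -/

import Mathlib

open MeasureTheory
open scoped ENNReal

/-- The GAN objective `J(D) = ∫ p_T·log D dμ + ∫ p_G·log (1−D) dμ`, well defined
with values in `[−∞, 0] ⊆ EReal` since both integrands are nonpositive when `D`
takes values in `(0,1)` and the densities are nonnegative: it is minus the sum of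
the `lintegral`s of the negations of the integrands. -/
noncomputable def GANJ {Z : Type*} [MeasurableSpace Z] (μ : Measure Z)
    (pT pG : Z → ℝ) (D : Z → ℝ) : EReal :=
  - (((∫⁻ z, ENNReal.ofReal (-(pT z * Real.log (D z))) ∂μ) +
      (∫⁻ z, ENNReal.ofReal (-(pG z * Real.log (1 - D z))) ∂μ) : ℝ≥0∞) : EReal)

lemma gan_eq {Z : Type*} [MeasurableSpace Z] (μ : Measure Z) (pT pG D : Z → ℝ)
    (hT : Measurable pT) (hT0 : ∀ z, 0 ≤ pT z) (hG0 : ∀ z, 0 ≤ pG z)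
    (hD : Measurable D) (hD' : ∀ z, D z ∈ Set.Ioo (0:ℝ) 1) :
    GANJ μ pT pG D = - ((∫⁻ z, ENNReal.ofReal
      (-(pT z * Real.log (D z)) + -(pG z * Real.log (1 - D z))) ∂μ : ℝ≥0∞) : EReal) := by
  unfold GANJ
  rw [← lintegral_add_left]
  · congr 2
    apply lintegral_congr
    intro z
    obtain ⟨h0, h1⟩ := hD' z
    rw [ENNReal.ofReal_add]
    · have := mul_nonneg (hT0 z) (neg_nonneg.2 (Real.log_nonpos h0.le h1.le))
      linarith
    · have := mul_nonneg (hG0 z)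
        (neg_nonneg.2 (Real.log_nonpos (x := 1 - D z) (by linarith) (by linarith)))
      linarith
  · fun_prop

lemma gan_int {Z : Type*} [MeasurableSpace Z] (μ : Measure Z) (pT pG : Z → ℝ)
    (hT : Measurable pT) (hT0 : ∀ z, 0 ≤ pT z) (hG0 : ∀ z, 0 ≤ pG z)
    (hT1 : ∫⁻ z, ENNReal.ofReal (pT z) ∂μ = 1)
    (hG1 : ∫⁻ z, ENNReal.ofReal (pG z) ∂μ = 1) :
    ∫⁻ z, ENNReal.ofReal ((pT z + pG z) * Real.log 2) ∂μ = ENNReal.ofReal (Real.log 4) := by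
  have h2 : 0 ≤ Real.log 2 := Real.log_nonneg (by norm_num)
  have h4 : Real.log 4 = 2 * Real.log 2 := by
    rw [show (4:ℝ) = 2 ^ 2 by norm_num, Real.log_pow]; norm_num
  have : ∀ z, ENNReal.ofReal ((pT z + pG z) * Real.log 2)
      = (ENNReal.ofReal (pT z) + ENNReal.ofReal (pG z)) * ENNReal.ofReal (Real.log 2) := by
    intro z
    rw [ENNReal.ofReal_mul (add_nonneg (hT0 z) (hG0 z)), ENNReal.ofReal_add (hT0 z) (hG0 z)]
  simp_rw [this]
  rw [lintegral_mul_const' _ _ ENNReal.ofReal_ne_top, lintegral_add_left (by fun_prop), hT1, hG1,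
    h4, ENNReal.ofReal_mul (by norm_num)]
  norm_num

lemma gan_pt (a b : ℝ) (ha : 0 ≤ a) (hb : 0 ≤ b) :
    (1 / 2 + (a - b) / (4 * (a + b))) ∈ Set.Ioo (0:ℝ) 1 ∧
    (-(a * Real.log (1 / 2 + (a - b) / (4 * (a + b)))) +
      -(b * Real.log (1 - (1 / 2 + (a - b) / (4 * (a + b))))) ≤ (a + b) * Real.log 2) ∧
    (b ≠ a → -(a * Real.log (1 / 2 + (a - b) / (4 * (a + b)))) +
      -(b * Real.log (1 - (1 / 2 + (a - b) / (4 * (a + b))))) < (a + b) * Real.log 2) := by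
  rcases (add_nonneg ha hb).eq_or_lt with hs | hs
  · have h1 : a = 0 := by linarith
    have h2 : b = 0 := by linarith
    subst h1 h2
    norm_num
  have p1 : 0 < 3 * a + b := by linarith
  have p2 : 0 < a + 3 * b := by linarith
  have e1 : 1 / 2 + (a - b) / (4 * (a + b)) = (3 * a + b) / (2 * (a + b)) / 2 := by
    field_simp; ring
  have e2 : 1 - (3 * a + b) / (2 * (a + b)) / 2 = (a + 3 * b) / (2 * (a + b)) / 2 := by
    field_simp; ring
  have q1 : 0 < (3 * a + b) / (2 * (a + b)) := by positivity
  have q2 : 0 < (a + 3 * b) / (2 * (a + b)) := by positivity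
  rw [e1, e2, Real.log_div q1.ne' (by norm_num), Real.log_div q2.ne' (by norm_num)]
  have l1 := mul_le_mul_of_nonneg_left (Real.one_sub_inv_le_log_of_pos q1) ha
  have l2 := mul_le_mul_of_nonneg_left (Real.one_sub_inv_le_log_of_pos q2) hb
  have key : a * (1 - ((3 * a + b) / (2 * (a + b)))⁻¹) + b * (1 - ((a + 3 * b) / (2 * (a + b)))⁻¹)
      = (a - b) ^ 2 * (a + b) / ((3 * a + b) * (a + 3 * b)) := by
    have n1 := p1.ne'
    have n2 := p2.ne'
    have n3 := hs.ne'
    rw [inv_div, inv_div, one_sub_div n1, one_sub_div n2, ← mul_div_assoc, ← mul_div_assoc,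
      div_add_div _ _ n1 n2]
    congr 1
    ring
  have k0 : 0 ≤ (a - b) ^ 2 * (a + b) / ((3 * a + b) * (a + 3 * b)) := by positivity
  refine ⟨⟨by positivity, by linarith [half_pos q2]⟩, by linarith, fun hne => ?_⟩
  have : a - b ≠ 0 := fun h => hne (by linarith)
  have k1 : 0 < (a - b) ^ 2 * (a + b) / ((3 * a + b) * (a + 3 * b)) := by positivity
  linarith

lemma gan_cast : ((-Real.log 4 : ℝ) : EReal) = - ((ENNReal.ofReal (Real.log 4) : ℝ≥0∞) : EReal) := by
  rw [EReal.coe_ennreal_ofReal, max_eq_left (Real.log_nonneg (by norm_num)), EReal.coe_neg]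

lemma gan_main {Z : Type*} [MeasurableSpace Z] (μ : Measure Z) (pT : Z → ℝ)
    (hpTm : Measurable pT) (hpT0 : ∀ z, 0 ≤ pT z)
    (hpT1 : ∫⁻ z, ENNReal.ofReal (pT z) ∂μ = 1) (pG : Z → ℝ) (hGm : Measurable pG)
    (hG0 : ∀ z, 0 ≤ pG z) (hG1 : (∫⁻ z, ENNReal.ofReal (pG z) ∂μ) = 1) :
      ((-Real.log 4 : ℝ) : EReal) ≤
        (⨆ (D : Z → ℝ) (_ : Measurable D ∧ ∀ z, D z ∈ Set.Ioo (0:ℝ) 1),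
          GANJ μ pT pG D) ∧
      ((⨆ (D : Z → ℝ) (_ : Measurable D ∧ ∀ z, D z ∈ Set.Ioo (0:ℝ) 1),
          GANJ μ pT pG D) = ((-Real.log 4 : ℝ) : EReal) ↔ pG =ᵐ[μ] pT) := by
  have hint := gan_int μ pT pG hpTm hpT0 hG0 hpT1 hG1
  set D₀ : Z → ℝ := fun z => 1 / 2 + (pT z - pG z) / (4 * (pT z + pG z)) with hD₀
  have hm : Measurable D₀ := by fun_prop
  have hI : ∀ z, D₀ z ∈ Set.Ioo (0:ℝ) 1 := fun z => (gan_pt _ _ (hpT0 z) (hG0 z)).1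
  have hsup : GANJ μ pT pG D₀ ≤ ⨆ (D : Z → ℝ)
      (_ : Measurable D ∧ ∀ z, D z ∈ Set.Ioo (0:ℝ) 1), GANJ μ pT pG D :=
    le_iSup₂_of_le D₀ ⟨hm, hI⟩ le_rfl
  have hle : ∀ z, ENNReal.ofReal
      (-(pT z * Real.log (D₀ z)) + -(pG z * Real.log (1 - D₀ z))) ≤
      ENNReal.ofReal ((pT z + pG z) * Real.log 2) := fun z =>
    ENNReal.ofReal_le_ofReal (gan_pt _ _ (hpT0 z) (hG0 z)).2.1
  have h1 : ((-Real.log 4 : ℝ) : EReal) ≤ GANJ μ pT pG D₀ := by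
    rw [gan_eq μ pT pG D₀ hpTm hpT0 hG0 hm hI, gan_cast, EReal.neg_le_neg_iff,
      EReal.coe_ennreal_le_coe_ennreal_iff, ← hint]
    exact lintegral_mono hle
  refine ⟨h1.trans hsup, fun h => ?_, fun h => le_antisymm ?_ (h1.trans hsup)⟩
  · by_contra hne
    rw [h] at hsup
    rw [gan_eq μ pT pG D₀ hpTm hpT0 hG0 hm hI, gan_cast, EReal.neg_le_neg_iff,
      EReal.coe_ennreal_le_coe_ennreal_iff, ← hint] at hsup
    refine absurd hsup (not_le.2 ?_)
    refine lintegral_strict_mono_of_ae_le_of_frequently_ae_lt (by fun_prop) ?_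
      (Filter.Eventually.of_forall hle) ?_
    · refine ne_top_of_le_ne_top ?_ (lintegral_mono hle)
      rw [hint]; exact ENNReal.ofReal_ne_top
    · have hf : ∃ᶠ z in ae μ, pG z ≠ pT z := fun h' => hne (h'.mono fun z hz => not_not.1 hz)
      refine hf.mono fun z hz => ?_
      have hne2 : 0 < pT z + pG z := by
        refine lt_of_le_of_ne (add_nonneg (hpT0 z) (hG0 z)) fun h0 => hz ?_
        linarith [hpT0 z, hG0 z]
      have := (gan_pt _ _ (hpT0 z) (hG0 z)).2.2 hz
      exact ((ENNReal.ofReal_lt_ofReal_iff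
        (mul_pos hne2 (Real.log_pos (by norm_num)))).2 this).ne
  · refine iSup₂_le fun D hD => ?_
    rw [gan_eq μ pT pG D hpTm hpT0 hG0 hD.1 hD.2, gan_cast, EReal.neg_le_neg_iff,
      EReal.coe_ennreal_le_coe_ennreal_iff, ← hint]
    refine lintegral_mono_ae (h.mono fun z hz => ENNReal.ofReal_le_ofReal ?_)
    obtain ⟨d0, d1⟩ := hD.2 z
    have d2 : 0 < 1 - D z := by linarith
    have hl : Real.log (D z) + Real.log (1 - D z) ≤ - (2 * Real.log 2) := by
      rw [← Real.log_mul d0.ne' d2.ne']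
      have : -(2 * Real.log 2) = Real.log (1 / 4) := by
        rw [one_div, Real.log_inv, show (4:ℝ) = 2 ^ 2 by norm_num, Real.log_pow]; norm_num
      rw [this]
      exact Real.log_le_log (mul_pos d0 d2) (by nlinarith [sq_nonneg (D z - 1 / 2)])
    rw [hz]
    nlinarith [mul_le_mul_of_nonneg_left hl (hpT0 z)]

/-- **Propositions 1+2 combined.** Under the GAN setup, for every
admissible generator density `p_G` the supremum over measurable discriminators
`D : Z → (0,1)` of `J(D)` is at least `−log 4`, with equality iff `p_G = p_T`
μ-a.e.; consequently the minimax value of the GAN game—the infimum over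
admissible generator densities of that supremum—equals `−log 4`, attained
exactly at `p_G = p_T` (μ-a.e.). -/
theorem stmt_6 {Z : Type*} [MeasurableSpace Z] (μ : Measure Z) (pT : Z → ℝ)
    (hpTm : Measurable pT) (hpT0 : ∀ z, 0 ≤ pT z)
    (hpT1 : ∫⁻ z, ENNReal.ofReal (pT z) ∂μ = 1) :
    (∀ pG : Z → ℝ, Measurable pG → (∀ z, 0 ≤ pG z) →
      (∫⁻ z, ENNReal.ofReal (pG z) ∂μ) = 1 →
      ((-Real.log 4 : ℝ) : EReal) ≤
        (⨆ (D : Z → ℝ) (_ : Measurable D ∧ ∀ z, D z ∈ Set.Ioo (0:ℝ) 1),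
          GANJ μ pT pG D) ∧
      ((⨆ (D : Z → ℝ) (_ : Measurable D ∧ ∀ z, D z ∈ Set.Ioo (0:ℝ) 1),
          GANJ μ pT pG D) = ((-Real.log 4 : ℝ) : EReal) ↔ pG =ᵐ[μ] pT)) ∧
    (⨅ (pG : Z → ℝ) (_ : Measurable pG ∧ (∀ z, 0 ≤ pG z) ∧
        (∫⁻ z, ENNReal.ofReal (pG z) ∂μ) = 1),
      ⨆ (D : Z → ℝ) (_ : Measurable D ∧ ∀ z, D z ∈ Set.Ioo (0:ℝ) 1),
        GANJ μ pT pG D) = ((-Real.log 4 : ℝ) : EReal) := by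
  have H := gan_main μ pT hpTm hpT0 hpT1
  refine ⟨H, le_antisymm ?_ ?_⟩
  · exact iInf₂_le_of_le pT ⟨hpTm, hpT0, hpT1⟩
      ((H pT hpTm hpT0 hpT1).2.2 Filter.EventuallyEq.rfl).le
  · exact le_iInf₂ fun pG hG => (H pG hG.1 hG.2.1 hG.2.2).1
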